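/- Let σ and w be Radon measures on ℝ, and let I and J be finite intervals with I ⊂ 3J ∖ J. Then ∬_{I×J} |x−y|⁻¹ dσ(y) dw(x) ≤ 2 [σ,w]_{A₂} σ(I)^{1/2} w(J)^{1/2}. -/

import Mathlib

/-!
Let `μ` be the product of `w` restricted to `J` and `σ` restricted to `I`. The pairs
`(x, y) ∈ J × I` with `|x - y| ≤ 1 / t` lie in a product `L × K` of adjacent intervals of length
`1 / t`, since both coordinates are within `1 / t` of a point separating `I` from `J`. Hence the `A₂`
condition puts the kernel `|x - y|⁻¹` in weak `L²(μ)`, with constant `A`.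
Kolmogorov's inequality, a truncation of the layer-cake formula, bounds the integral of a weak
`L²` function by `2 A μ(univ)^{1/2}`, and `μ(univ) = σ(I) w(J)`.
-/

open MeasureTheory Set
open scoped ENNReal

noncomputable section

/-- `K` and `L` are adjacent (bounded, nonempty, disjoint, touching) intervals
of equal length. -/
def AdjacentEq (K L : Set ℝ) : Prop :=
  K.OrdConnected ∧ L.OrdConnected ∧ K.Nonempty ∧ L.Nonempty ∧
  Bornology.IsBounded K ∧ Bornology.IsBounded L ∧ Disjoint K L ∧
  (sSup K = sInf L ∨ sSup L = sInf K) ∧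
  sSup K - sInf K = sSup L - sInf L

/-- The simple two-weight `A₂` condition `[σ,w]_{A₂} ≤ A`:
`σ(K)^{1/2} w(L)^{1/2} ≤ A |K|` for all pairs of adjacent intervals of equal length. -/
def SimpleA2 (σ w : Measure ℝ) (A : ℝ) : Prop :=
  ∀ K L : Set ℝ, AdjacentEq K L →
    Real.sqrt (σ K).toReal * Real.sqrt (w L).toReal ≤ A * (sSup K - sInf K)

section Kolmogorov

variable {α : Type*} [MeasurableSpace α] {μ : Measure α} {f : α → ℝ} {p q C : ℝ}

lemma lintegral_Ioi_ofReal_div_rpow (hp : 1 < p) (hC : 0 ≤ C) {c : ℝ} (hc : 0 < c) :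
    ∫⁻ t in Ioi c, ENNReal.ofReal ((C / t) ^ p) =
      ENNReal.ofReal ((C / c) ^ p * c / (p - 1)) := by
  have h_rpow : EqOn (fun t ↦ (C / t) ^ p) (fun t ↦ C ^ p * t ^ (-p)) (Ioi c) := fun t ht ↦ by
    have ht0 : 0 < t := hc.trans ht
    simp only [Real.rpow_neg ht0.le, Real.div_rpow hC ht0.le, div_eq_mul_inv (C ^ p)]
  have h_int : IntegrableOn (fun t ↦ (C / t) ^ p) (Ioi c) :=
    IntegrableOn.congr_fun ((integrableOn_Ioi_rpow_of_lt (neg_lt_neg hp) hc).const_mul _)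
      h_rpow.symm measurableSet_Ioi
  have h_nonneg : 0 ≤ᵐ[volume.restrict (Ioi c)] fun t ↦ (C / t) ^ p :=
    ae_restrict_of_forall_mem measurableSet_Ioi fun t ht ↦
      Real.rpow_nonneg (div_nonneg hC (hc.trans ht).le) p
  rw [← ofReal_integral_eq_lintegral_ofReal h_int h_nonneg,
    setIntegral_congr_fun measurableSet_Ioi h_rpow, integral_const_mul,
    integral_Ioi_rpow_of_lt (neg_lt_neg hp) hc, Real.div_rpow hC hc.le, Real.rpow_add hc,
    Real.rpow_neg hc.le, Real.rpow_one, show -p + 1 = -(p - 1) by ring, neg_div_neg_eq]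
  congr 1
  ring

lemma lintegral_le_add_of_meas_ge_le (hf : AEMeasurable f μ) (hf0 : 0 ≤ᵐ[μ] f)
    (hp : 1 < p) (hC : 0 ≤ C)
    (h : ∀ t > 0, μ {x | t ≤ f x} ≤ ENNReal.ofReal ((C / t) ^ p)) {c : ℝ} (hc : 0 < c) :
    ∫⁻ x, ENNReal.ofReal (f x) ∂μ ≤
      μ univ * ENNReal.ofReal c + ENNReal.ofReal ((C / c) ^ p * c / (p - 1)) := by
  have h_low : ∫⁻ t in Ioc 0 c, μ {x | t ≤ f x} ≤ μ univ * ENNReal.ofReal c :=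
    calc ∫⁻ t in Ioc 0 c, μ {x | t ≤ f x}
      _ ≤ ∫⁻ _ in Ioc 0 c, μ univ := lintegral_mono fun t ↦ measure_mono (subset_univ _)
      _ = μ univ * ENNReal.ofReal c := by rw [setLIntegral_const, Real.volume_Ioc, sub_zero]
  have h_high : ∫⁻ t in Ioi c, μ {x | t ≤ f x} ≤
      ENNReal.ofReal ((C / c) ^ p * c / (p - 1)) := by
    rw [← lintegral_Ioi_ofReal_div_rpow hp hC hc]
    exact setLIntegral_mono' measurableSet_Ioi fun t ht ↦ h t (hc.trans ht)
  rw [lintegral_eq_lintegral_meas_le μ hf0 hf, ← Ioc_union_Ioi_eq_Ioi hc.le]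
  exact (lintegral_union_le _ _ _).trans (add_le_add h_low h_high)

lemma exists_truncation_bound_eq (hpq : p.HolderConjugate q) (hC : 0 < C) {m : ℝ} (hm : 0 < m) :
    ∃ c > 0, m * c + (C / c) ^ p * c / (p - 1) = q * C * m ^ q⁻¹ := by
  -- At this height the trivial bound `m` and the weak-type bound `(C / c) ^ p` coincide.
  set c : ℝ := C / m ^ p⁻¹ with hc_def
  have h_balance : (C / c) ^ p = m := by
    rw [hc_def, div_div_cancel₀ hC.ne', Real.rpow_inv_rpow hm.le hpq.ne_zero]
  have h_rpow : m * c = C * m ^ q⁻¹ := by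
    rw [hc_def, ← hpq.one_sub_inv, Real.rpow_sub hm, Real.rpow_one, mul_div_left_comm]
  have h_conj : 1 + 1 / (p - 1) = q := by
    rw [hpq.conjugate_eq, one_add_div hpq.sub_one_ne_zero, sub_add_cancel]
  refine ⟨c, by positivity, ?_⟩
  calc m * c + (C / c) ^ p * c / (p - 1)
    _ = (1 + 1 / (p - 1)) * (m * c) := by rw [h_balance]; ring
    _ = q * C * m ^ q⁻¹ := by rw [h_conj, h_rpow, mul_assoc]

/-- Kolmogorov's inequality for weak `L^p`. -/
theorem lintegral_le_of_meas_ge_le (hf : AEMeasurable f μ) (hf0 : 0 ≤ᵐ[μ] f)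
    (hpq : p.HolderConjugate q) (hC : 0 ≤ C)
    (h : ∀ t > 0, μ {x | t ≤ f x} ≤ ENNReal.ofReal ((C / t) ^ p)) :
    ∫⁻ x, ENNReal.ofReal (f x) ∂μ ≤ ENNReal.ofReal (q * C) * μ univ ^ q⁻¹ := by
  rcases hC.eq_or_lt with rfl | hC
  · have h_null : ∀ t ∈ Ioi (0 : ℝ), μ {x | t ≤ f x} = 0 := fun t ht ↦ by
      simpa [Real.zero_rpow hpq.ne_zero] using h t ht
    rw [lintegral_eq_lintegral_meas_le μ hf0 hf,
      setLIntegral_congr_fun measurableSet_Ioi h_null, lintegral_zero]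
    exact zero_le
  rcases eq_or_ne (μ univ) 0 with hμ0 | hμ0
  · simp [Measure.measure_univ_eq_zero.mp hμ0]
  rcases eq_or_ne (μ univ) ∞ with hμ | hμ
  · rw [hμ, ENNReal.top_rpow_of_pos hpq.symm.inv_pos,
      ENNReal.mul_top (ENNReal.ofReal_pos.mpr (mul_pos hpq.symm.pos hC)).ne']
    exact le_top
  set m : ℝ := (μ univ).toReal
  have hm : 0 < m := ENNReal.toReal_pos hμ0 hμ
  have hμm : μ univ = ENNReal.ofReal m := (ENNReal.ofReal_toReal hμ).symm
  obtain ⟨c, hc, h_opt⟩ := exists_truncation_bound_eq hpq hC hm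
  have h_tail : 0 ≤ (C / c) ^ p * c / (p - 1) := div_nonneg (by positivity) hpq.sub_one_pos.le
  calc ∫⁻ x, ENNReal.ofReal (f x) ∂μ
    _ ≤ μ univ * ENNReal.ofReal c + ENNReal.ofReal ((C / c) ^ p * c / (p - 1)) :=
      lintegral_le_add_of_meas_ge_le hf hf0 hpq.lt hC.le h hc
    _ = ENNReal.ofReal (m * c + (C / c) ^ p * c / (p - 1)) := by
      rw [hμm, ← ENNReal.ofReal_mul hm.le, ENNReal.ofReal_add (by positivity) h_tail]
    _ = ENNReal.ofReal (q * C) * μ univ ^ q⁻¹ := by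
      rw [h_opt, hμm, ENNReal.ofReal_rpow_of_pos hm,
        ENNReal.ofReal_mul (mul_nonneg hpq.symm.nonneg hC.le)]

end Kolmogorov

lemma AdjacentEq.symm {K L : Set ℝ} (h : AdjacentEq K L) : AdjacentEq L K := by
  obtain ⟨hK, hL, hK_ne, hL_ne, hK_bdd, hL_bdd, h_disj, h_touch, h_len⟩ := h
  exact ⟨hL, hK, hL_ne, hK_ne, hL_bdd, hK_bdd, h_disj.symm, h_touch.symm, h_len.symm⟩

lemma AdjacentEq.length_eq {K L : Set ℝ} (h : AdjacentEq K L) :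
    sSup K - sInf K = sSup L - sInf L := by
  obtain ⟨-, -, -, -, -, -, -, -, h_len⟩ := h
  exact h_len

lemma adjacentEq_Icc_Ioc (b : ℝ) {t : ℝ} (ht : 0 < t) :
    AdjacentEq (Icc (b - t) b) (Ioc b (b + t)) := by
  have h_left : b - t ≤ b := by linarith
  have h_right : b < b + t := by linarith
  refine ⟨ordConnected_Icc, ordConnected_Ioc, nonempty_Icc.2 h_left, nonempty_Ioc.2 h_right,
    Metric.isBounded_Icc _ _, Metric.isBounded_Ioc _ _,
    (Iic_disjoint_Ioi le_rfl).mono Icc_subset_Iic_self Ioc_subset_Ioi_self, Or.inl ?_, ?_⟩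
  · rw [csSup_Icc h_left, csInf_Ioc h_right]
  · rw [csSup_Icc h_left, csInf_Ioc h_right, csInf_Icc h_left, csSup_Ioc h_right]
    ring

lemma adjacentEq_Ico_Icc (b : ℝ) {t : ℝ} (ht : 0 < t) :
    AdjacentEq (Ico (b - t) b) (Icc b (b + t)) := by
  have h_left : b - t < b := by linarith
  have h_right : b ≤ b + t := by linarith
  refine ⟨ordConnected_Ico, ordConnected_Icc, nonempty_Ico.2 h_left, nonempty_Icc.2 h_right,
    Metric.isBounded_Ico _ _, Metric.isBounded_Icc _ _,
    (Iio_disjoint_Ici le_rfl).mono Ico_subset_Iio_self Icc_subset_Ici_self, Or.inl ?_, ?_⟩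
  · rw [csSup_Ico h_left, csInf_Icc h_right]
  · rw [csSup_Ico h_left, csInf_Icc h_right, csInf_Ico h_left, csSup_Icc h_right]
    ring

lemma forall_lt_or_forall_gt_of_disjoint {α : Type*} [LinearOrder α] {s t : Set α}
    (hs : s.OrdConnected) (ht : t.OrdConnected) (hst : Disjoint s t) :
    (∀ x ∈ s, ∀ y ∈ t, x < y) ∨ ∀ x ∈ s, ∀ y ∈ t, y < x := by
  by_contra! h
  obtain ⟨⟨x, hx, y, hy, hyx⟩, x', hx', y', hy', hxy'⟩ := h
  rcases le_total x' y with hxy | hyx'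
  · exact disjoint_left.1 hst (hs.out hx' hx ⟨hxy, hyx⟩) hy
  · exact disjoint_left.1 hst hx' (ht.out hy hy' ⟨hyx', hxy'⟩)

lemma exists_adjacentEq_of_forall_lt {P Q : Set ℝ} (hP : P.Nonempty) (hQ : Q.Nonempty)
    (hPQ : ∀ x ∈ P, ∀ y ∈ Q, x < y) {t : ℝ} (ht : 0 < t) :
    ∃ K L : Set ℝ, AdjacentEq K L ∧ sSup K - sInf K = t ∧
      ∀ x ∈ P, ∀ y ∈ Q, |x - y| ≤ t → x ∈ K ∧ y ∈ L := by
  obtain ⟨b, hb_upper, hb_lower⟩ :=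
    exists_between_of_forall_le hP hQ fun x hx y hy ↦ (hPQ x hx y hy).le
  -- The separating point may belong to one of the two sets, and goes to the interval on that side.
  by_cases hb : b ∈ P
  · refine ⟨Icc (b - t) b, Ioc b (b + t), adjacentEq_Icc_Ioc b ht, ?_, fun x hx y hy hxy ↦ ?_⟩
    · rw [csSup_Icc (by linarith), csInf_Icc (by linarith), sub_sub_cancel]
    have hxb : x ≤ b := hb_upper hx
    have hby : b < y := hPQ b hb y hy
    obtain ⟨h_dist, -⟩ := abs_le.1 hxy
    exact ⟨⟨by linarith, hxb⟩, hby, by linarith⟩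
  · refine ⟨Ico (b - t) b, Icc b (b + t), adjacentEq_Ico_Icc b ht, ?_, fun x hx y hy hxy ↦ ?_⟩
    · rw [csSup_Ico (by linarith), csInf_Ico (by linarith), sub_sub_cancel]
    have hxb : x < b := (hb_upper hx).lt_of_ne fun h ↦ hb (h ▸ hx)
    have hby : b ≤ y := hb_lower hy
    obtain ⟨h_dist, -⟩ := abs_le.1 hxy
    exact ⟨⟨by linarith, hxb⟩, hby, by linarith⟩

lemma exists_adjacentEq_of_disjoint {I J : Set ℝ} (hI : I.OrdConnected) (hJ : J.OrdConnected)
    (hI_ne : I.Nonempty) (hJ_ne : J.Nonempty) (hIJ : Disjoint I J) {t : ℝ} (ht : 0 < t) :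
    ∃ K L : Set ℝ, AdjacentEq K L ∧ sSup K - sInf K = t ∧
      ∀ y ∈ I, ∀ x ∈ J, |x - y| ≤ t → y ∈ K ∧ x ∈ L := by
  rcases forall_lt_or_forall_gt_of_disjoint hI hJ hIJ with h_lt | h_gt
  · simpa only [abs_sub_comm] using exists_adjacentEq_of_forall_lt hI_ne hJ_ne h_lt ht
  · obtain ⟨L, K, hLK, h_len, h_mem⟩ :=
      exists_adjacentEq_of_forall_lt hJ_ne hI_ne (fun x hx y hy ↦ h_gt y hy x hx) ht
    exact ⟨K, L, hLK.symm, hLK.length_eq.symm.trans h_len,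
      fun y hy x hx hxy ↦ (h_mem x hx y hy hxy).symm⟩

section SimpleA2

variable {σ w : Measure ℝ} {A : ℝ}

lemma SimpleA2.nonneg (hA2 : SimpleA2 σ w A) : 0 ≤ A := by
  have h_unit := hA2 _ _ (adjacentEq_Icc_Ioc 1 one_pos)
  rw [sub_self, csSup_Icc zero_le_one, csInf_Icc zero_le_one, sub_zero, mul_one] at h_unit
  exact (by positivity : (0 : ℝ) ≤ _).trans h_unit

variable [IsLocallyFiniteMeasure σ] [IsLocallyFiniteMeasure w]

lemma SimpleA2.measure_mul_measure_le (hA2 : SimpleA2 σ w A) {K L : Set ℝ}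
    (hKL : AdjacentEq K L) :
    σ K * w L ≤ ENNReal.ofReal ((A * (sSup K - sInf K)) ^ 2) := by
  have h_sqrt := hA2 K L hKL
  obtain ⟨-, -, -, -, hK_bdd, hL_bdd, -⟩ := hKL
  rw [← ENNReal.ofReal_toReal hK_bdd.measure_lt_top.ne,
    ← ENNReal.ofReal_toReal hL_bdd.measure_lt_top.ne, ← ENNReal.ofReal_mul ENNReal.toReal_nonneg]
  refine ENNReal.ofReal_le_ofReal ?_
  rw [← Real.sqrt_mul ENNReal.toReal_nonneg] at h_sqrt
  exact (Real.sqrt_le_left ((Real.sqrt_nonneg _).trans h_sqrt)).1 h_sqrt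

lemma SimpleA2.measure_prod_restrict_le (hA2 : SimpleA2 σ w A) {I J : Set ℝ}
    (hI : I.OrdConnected) (hJ : J.OrdConnected) (hIJ : Disjoint I J) {t : ℝ} (ht : 0 < t) :
    ((w.restrict J).prod (σ.restrict I)) {z | |z.1 - z.2| ≤ t} ≤
      ENNReal.ofReal ((A * t) ^ 2) := by
  rcases I.eq_empty_or_nonempty with rfl | hI_ne
  · simp
  rcases J.eq_empty_or_nonempty with rfl | hJ_ne
  · simp
  obtain ⟨K, L, hKL, h_len, h_mem⟩ := exists_adjacentEq_of_disjoint hI hJ hI_ne hJ_ne hIJ ht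
  have h_sub : {z : ℝ × ℝ | |z.1 - z.2| ≤ t} ∩ J ×ˢ I ⊆ L ×ˢ K := fun z hz ↦
    (h_mem z.2 hz.2.2 z.1 hz.2.1 hz.1).symm
  calc ((w.restrict J).prod (σ.restrict I)) {z | |z.1 - z.2| ≤ t}
    _ = (w.prod σ) ({z | |z.1 - z.2| ≤ t} ∩ J ×ˢ I) := by
      rw [Measure.prod_restrict,
        Measure.restrict_apply' (hJ.measurableSet.prod hI.measurableSet)]
    _ ≤ (w.prod σ) (L ×ˢ K) := measure_mono h_sub
    _ = σ K * w L := by rw [Measure.prod_prod, mul_comm]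
    _ ≤ ENNReal.ofReal ((A * t) ^ 2) := h_len ▸ hA2.measure_mul_measure_le hKL

end SimpleA2

lemma ofReal_sqrt_toReal {x : ℝ≥0∞} (hx : x ≠ ∞) :
    ENNReal.ofReal √x.toReal = x ^ (2⁻¹ : ℝ) := by
  rw [Real.sqrt_eq_rpow, one_div,
    ← ENNReal.ofReal_rpow_of_nonneg ENNReal.toReal_nonneg (by norm_num), ENNReal.ofReal_toReal hx]

theorem statement5_general (σ w : Measure ℝ) [IsLocallyFiniteMeasure σ]
    [IsLocallyFiniteMeasure w] (A : ℝ) (hA2 : SimpleA2 σ w A)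
    (I J : Set ℝ) (hI : I.OrdConnected) (hJ : J.OrdConnected) (hIJ : Disjoint I J) :
    ∫⁻ x in J, (∫⁻ y in I, ENNReal.ofReal |x - y|⁻¹ ∂σ) ∂w ≤
      ENNReal.ofReal (2 * A) * σ I ^ (2⁻¹ : ℝ) * w J ^ (2⁻¹ : ℝ) := by
  set μ := (w.restrict J).prod (σ.restrict I)
  set kernel : ℝ × ℝ → ℝ := fun z ↦ |z.1 - z.2|⁻¹
  have h_meas : Measurable kernel := by fun_prop
  have h_nonneg : 0 ≤ kernel := fun z ↦ by positivity
  have h_weak : ∀ t > 0, μ {z | t ≤ kernel z} ≤ ENNReal.ofReal ((A / t) ^ (2 : ℝ)) := by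
    intro t ht
    have h_sub : {z | t ≤ kernel z} ⊆ {z | |z.1 - z.2| ≤ t⁻¹} := fun z hz ↦
      le_inv_of_le_inv₀ ht hz
    rw [Real.rpow_two]
    exact (measure_mono h_sub).trans (hA2.measure_prod_restrict_le hI hJ hIJ (inv_pos.2 ht))
  have h_univ : μ univ = σ I * w J := by
    rw [← univ_prod_univ, Measure.prod_prod, Measure.restrict_apply_univ,
      Measure.restrict_apply_univ, mul_comm]
  calc ∫⁻ x in J, (∫⁻ y in I, ENNReal.ofReal |x - y|⁻¹ ∂σ) ∂w
    _ = ∫⁻ z, ENNReal.ofReal (kernel z) ∂μ :=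
      (lintegral_prod _ h_meas.ennreal_ofReal.aemeasurable).symm
    _ ≤ ENNReal.ofReal (2 * A) * μ univ ^ (2⁻¹ : ℝ) :=
      lintegral_le_of_meas_ge_le h_meas.aemeasurable (.of_forall h_nonneg) .two_two hA2.nonneg
        h_weak
    _ = ENNReal.ofReal (2 * A) * σ I ^ (2⁻¹ : ℝ) * w J ^ (2⁻¹ : ℝ) := by
      rw [h_univ, ENNReal.mul_rpow_of_nonneg _ _ (by norm_num), mul_assoc]

theorem statement5 (σ w : Measure ℝ) [IsLocallyFiniteMeasure σ] [IsLocallyFiniteMeasure w]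
    (A : ℝ) (hA : 0 ≤ A) (hA2 : SimpleA2 σ w A)
    (I J : Set ℝ) (hI : I.OrdConnected) (hJ : J.OrdConnected)
    (hJne : J.Nonempty) (hJbdd : Bornology.IsBounded J)
    -- `I ⊂ 3J ∖ J`:
    (hIJ : I ⊆ {x : ℝ | |x - (sInf J + sSup J) / 2| ≤ (3 / 2) * (sSup J - sInf J)} \ J) :
    ∫⁻ x in J, (∫⁻ y in I, ENNReal.ofReal |x - y|⁻¹ ∂σ) ∂w ≤
      ENNReal.ofReal (2 * A * Real.sqrt (σ I).toReal * Real.sqrt (w J).toReal) := by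
  have hI_bdd : Bornology.IsBounded I := Metric.isBounded_closedBall.subset fun x hx ↦ (hIJ hx).1
  rw [ENNReal.ofReal_mul (by positivity), ENNReal.ofReal_mul (by positivity),
    ofReal_sqrt_toReal hI_bdd.measure_lt_top.ne, ofReal_sqrt_toReal hJbdd.measure_lt_top.ne]
  exact statement5_general σ w A hA2 I J hI hJ (disjoint_left.2 fun x hx ↦ (hIJ hx).2)
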